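/- The cross-entropy transition probabilities coincide with the zero-variance transition probabilities: for every internal state x ∈ 𝒯 with γ(x) > 0 that is reachable from 0 before absorption, and every y ∈ 𝒳, one has E[1_A · N(x,y) | X(0) = 0] / E[1_A · Σ_{z∈𝒳} N(x,z) | X(0) = 0] = p(x,y) · γ(y) / γ(x), where γ(y) is taken to be 1 for y ∈ ℱ and 0 for y = 0 (the denominator being strictly positive under the stated reachability assumption and P(A) > 0). -/

import Mathlib

open MeasureTheory ENNReal

noncomputable section

/-- The absorption time `T = inf {t > 0 : X t ∈ {0} ∪ F}` of a trajectory `ω`. -/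
def absTime {S : Type*} (good : S) (F : Set S) (ω : ℕ → S) : ℕ∞ :=
  sInf {t : ℕ∞ | ∃ n : ℕ, t = (n : ℕ∞) ∧ 0 < n ∧ (ω n = good ∨ ω n ∈ F)}

/-- The rare event `A = {X T ∈ F}`: the chain is absorbed in the bad set `F`. -/
def hitsF {S : Type*} (good : S) (F : Set S) (ω : ℕ → S) : Prop :=
  ∃ n : ℕ, absTime good F ω = (n : ℕ∞) ∧ ω n ∈ F

open Classical in
/-- `N(x,y)`: the number of transitions `x → y` strictly before the absorption time. -/
def transCount {S : Type*} (good : S) (F : Set S) (x y : S) (ω : ℕ → S) : ℝ≥0∞ :=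
  ∑' t : ℕ, if (t : ℕ∞) < absTime good F ω ∧ ω t = x ∧ ω (t + 1) = y then 1 else 0

open Classical in
/-- The number of visits to `x` up to (and including) the absorption time. -/
def visitCount {S : Type*} (good : S) (F : Set S) (x : S) (ω : ℕ → S) : ℝ≥0∞ :=
  ∑' t : ℕ, if (t : ℕ∞) ≤ absTime good F ω ∧ ω t = x then 1 else 0

open Classical in
/-- `γ̃(y)`: the hitting probability `γ(y)` for internal `y`, with the convention that it is
`1` on the bad set `F` and `0` at the good state. -/
def gammaTilde {S : Type*} [MeasurableSpace S] (good : S) (F : Set S)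
    (ℙ : S → Measure (ℕ → S)) (y : S) : ℝ≥0∞ :=
  if y ∈ F then 1 else if y = good then 0 else ℙ y {ω | hitsF good F ω}

/-!
Let `G(z, x)` be the expected number of visits to `x` before absorption, starting from `z`. On
`{t < T}` the event `A` only depends on the trajectory shifted by `t`, so the Markov property,
applied at each time `t < T` with `X t = x`, gives
`E_z[1_A N(x, y)] = G(z, x) P_x(A, X 1 = y) = G(z, x) p(x, y) γ̃(y)`,
and summation over `y` gives `E_z[1_A Σ_y N(x, y)] = G(z, x) γ(x)`. The factor `G(z, x)` cancels in
the ratio once it is neither `0` nor `∞`. It is nonzero because `x` is reachable from `z`. It is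
finite by the last-exit decomposition
`P_z(A, x is visited before T) = G(z, x) P_x(A, x is not revisited before T)`:
taking `z = x` the left side is `γ(x) > 0`, so the last probability is positive, and for general `z`
the left side is at most `1`.
-/

section Trajectories

variable {S : Type*} (good : S) (F : Set S)

/-- The time shift `θ_t` on trajectories, dropping the first `t` steps. -/
def trajShift (t : ℕ) (ω : ℕ → S) : ℕ → S := fun i ↦ ω (t + i)

/-- The trajectories that are absorbed in `F` and do not return to `x` at any positive time before
absorption. Started at `x`, this is the event that time `0` is the last visit to `x`. -/
def hitsWithoutReturn (x : S) : Set (ℕ → S) :=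
  {ω | hitsF good F ω ∧ ∀ s : ℕ, 0 < s → (s : ℕ∞) < absTime good F ω → ω s ≠ x}

variable {good F} {ω : ℕ → S} {t : ℕ}

lemma natCast_lt_absTime_iff :
    (t : ℕ∞) < absTime good F ω ↔ ∀ n, 0 < n → n ≤ t → ω n ∉ insert good F := by
  rw [← ENat.add_one_le_iff (ENat.natCast_ne_top t), absTime, le_sInf_iff]
  constructor
  · intro h n hn hnt hmem
    have : t + 1 ≤ n := by exact_mod_cast h n ⟨n, rfl, hn, hmem⟩
    omega
  · rintro h _ ⟨n, rfl, hn, hmem⟩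
    have : t < n := lt_of_not_ge fun hnt ↦ h n hn hnt hmem
    exact_mod_cast this

lemma zero_lt_absTime : ((0 : ℕ) : ℕ∞) < absTime good F ω :=
  natCast_lt_absTime_iff.2 fun _ hn hn0 ↦ absurd hn0 hn.not_ge

lemma natCast_add_lt_absTime_iff (ht : (t : ℕ∞) < absTime good F ω) (n : ℕ) :
    ((t + n : ℕ) : ℕ∞) < absTime good F ω ↔ (n : ℕ∞) < absTime good F (trajShift t ω) := by
  simp only [natCast_lt_absTime_iff] at ht ⊢
  constructor
  · exact fun h m hm hmn ↦ h (t + m) (by omega) (by omega)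
  · intro h m hm hmn
    obtain hmt | ⟨k, rfl⟩ := (le_or_gt m t).imp_right fun h ↦ Nat.exists_eq_add_of_le h.le
    · exact ht m hm hmt
    · by_cases hk : k = 0
      · exact ht _ hm (by omega)
      · exact h k (by omega) (by omega)

lemma absTime_eq_succ (ht : (t : ℕ∞) < absTime good F ω) (hmem : ω (t + 1) ∈ insert good F) :
    absTime good F ω = (t + 1 : ℕ) :=
  le_antisymm (sInf_le ⟨t + 1, rfl, t.succ_pos, hmem⟩) (by exact_mod_cast Order.add_one_le_of_lt ht)

lemma hitsF_iff_exists_natCast_lt_absTime :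
    hitsF good F ω ↔ ∃ n : ℕ, (n : ℕ∞) < absTime good F ω ∧ ω (n + 1) ∈ F := by
  constructor
  · rintro ⟨_ | n, hT, hF⟩
    · exact absurd hT zero_lt_absTime.ne'
    · exact ⟨n, hT ▸ by exact_mod_cast n.lt_succ_self, hF⟩
  · rintro ⟨n, hn, hF⟩
    exact ⟨n + 1, absTime_eq_succ hn (Set.mem_insert_of_mem _ hF), hF⟩

lemma hitsF_trajShift_iff (ht : (t : ℕ∞) < absTime good F ω) :
    hitsF good F (trajShift t ω) ↔ hitsF good F ω := by
  simp only [hitsF_iff_exists_natCast_lt_absTime, ← natCast_add_lt_absTime_iff ht]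
  constructor
  · exact fun ⟨n, hn, hF⟩ ↦ ⟨t + n, hn, hF⟩
  · rintro ⟨n, hn, hF⟩
    have htn : t ≤ n := by
      by_contra! hnt
      exact natCast_lt_absTime_iff.1 ht (n + 1) n.succ_pos hnt (Set.mem_insert_of_mem _ hF)
    obtain ⟨k, rfl⟩ := Nat.exists_eq_add_of_le htn
    exact ⟨k, hn, hF⟩

lemma trajShift_mem_hitsWithoutReturn_iff {x : S} (ht : (t : ℕ∞) < absTime good F ω) :
    trajShift t ω ∈ hitsWithoutReturn good F x ↔
      hitsF good F ω ∧ ∀ s : ℕ, t < s → (s : ℕ∞) < absTime good F ω → ω s ≠ x := by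
  simp only [hitsWithoutReturn, Set.mem_ofPred_eq, hitsF_trajShift_iff ht,
    ← natCast_add_lt_absTime_iff ht]
  refine and_congr_right fun _ ↦ ⟨fun h s hs ↦ ?_, fun h s hs ↦ h (t + s) (by omega)⟩
  obtain ⟨k, rfl⟩ := Nat.exists_eq_add_of_le hs.le
  exact h k (by omega)

lemma exists_last_visit {x : S} (hT : absTime good F ω ≠ ⊤)
    (hvisit : ∃ t : ℕ, (t : ℕ∞) < absTime good F ω ∧ ω t = x) :
    ∃ t : ℕ, (t : ℕ∞) < absTime good F ω ∧ ω t = x ∧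
      ∀ s : ℕ, t < s → (s : ℕ∞) < absTime good F ω → ω s ≠ x := by
  obtain ⟨n, hn⟩ := ENat.ne_top_iff_exists.1 hT
  have hbdd : BddAbove {t : ℕ | (t : ℕ∞) < absTime good F ω ∧ ω t = x} :=
    ⟨n, fun t ht ↦ by exact_mod_cast (hn ▸ ht.1).le⟩
  obtain ⟨hlt, hx⟩ := Nat.sSup_mem hvisit hbdd
  exact ⟨_, hlt, hx, fun s hs hsT hsx ↦ hs.not_ge (le_csSup hbdd ⟨hsT, hsx⟩)⟩

lemma hitsF_of_mem (h : ω 1 ∈ F) : hitsF good F ω :=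
  hitsF_iff_exists_natCast_lt_absTime.2 ⟨0, zero_lt_absTime, h⟩

lemma not_hitsF_of_eq_good (hgood : good ∉ F) (h : ω 1 = good) : ¬ hitsF good F ω := by
  rintro ⟨n, hT, hF⟩
  rw [absTime_eq_succ zero_lt_absTime (h ▸ Set.mem_insert _ _), Nat.cast_inj] at hT
  subst hT
  exact hgood (h ▸ hF)

lemma hitsF_iff_hitsF_trajShift_one (h : ω 1 ∉ insert good F) :
    hitsF good F ω ↔ hitsF good F (trajShift 1 ω) := by
  refine (hitsF_trajShift_iff (natCast_lt_absTime_iff.2 fun n hn hn1 ↦ ?_)).symm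
  rwa [le_antisymm hn1 hn]

lemma cylinder_add_eq_inter (f : ℕ → S) (t n : ℕ) :
    PiNat.cylinder f (t + n + 1) =
      PiNat.cylinder f (t + 1) ∩ trajShift t ⁻¹' PiNat.cylinder (trajShift t f) (n + 1) := by
  ext ω
  simp only [PiNat.mem_cylinder_iff, Set.mem_inter_iff, Set.mem_preimage, trajShift]
  refine ⟨fun h ↦ ⟨fun i hi ↦ h i (by omega), fun i hi ↦ h (t + i) (by omega)⟩, ?_⟩
  rintro ⟨hinit, htail⟩ i hi
  obtain hit | hti := lt_or_ge i (t + 1)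
  · exact hinit i hit
  · obtain ⟨k, rfl⟩ := Nat.exists_eq_add_of_le (Nat.le_of_succ_le hti)
    exact htail k (by omega)

lemma exists_trajShift_eq {f g : ℕ → S} (h : g 0 = f t) :
    ∃ k : ℕ → S, (∀ i ≤ t, k i = f i) ∧ trajShift t k = g := by
  refine ⟨fun i ↦ if i ≤ t then f i else g (i - t), fun i hi ↦ if_pos hi, funext fun i ↦ ?_⟩
  obtain rfl | hi := Nat.eq_zero_or_pos i
  · simp [trajShift, h]
  · simp [trajShift, hi.ne']

lemma transCount_eq_tsum_indicator (x y : S) (ω : ℕ → S) :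
    transCount good F x y ω =
      ∑' t : ℕ, Set.indicator
        {ω | (t : ℕ∞) < absTime good F ω ∧ ω t = x ∧ ω (t + 1) = y} 1 ω := by
  classical
  simp only [transCount, Set.indicator_apply, Set.mem_ofPred_eq, Pi.one_apply]

end Trajectories

section Measurability

open Preorder

variable {S : Type*} [MeasurableSpace S]

@[fun_prop]
lemma measurable_trajShift (t : ℕ) : Measurable (trajShift (S := S) t) :=
  measurable_pi_lambda _ fun i ↦ measurable_pi_apply (t + i)

lemma cylinder_succ_eq_preimage {X : ℕ → Type*} (f : ∀ n, X n) (n : ℕ) :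
    PiNat.cylinder f (n + 1) = frestrictLe n ⁻¹' {frestrictLe n f} := by
  ext ω
  simp [PiNat.mem_cylinder_iff, funext_iff]

lemma tsum_measure_inter_preimage_singleton {α β : Type*} [MeasurableSpace α] [Countable β]
    (μ : Measure α) {f : α → β} (hf : ∀ y, MeasurableSet (f ⁻¹' {y})) (A : Set α) :
    ∑' y, μ (A ∩ f ⁻¹' {y}) = μ A := by
  have huniv := tsum_measure_preimage_singleton (μ := μ.restrict A) Set.countable_univ
    fun y _ ↦ hf y
  rw [tsum_univ fun y ↦ μ.restrict A (f ⁻¹' {y}), Set.preimage_univ,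
    Measure.restrict_apply_univ] at huniv
  simpa only [Measure.restrict_apply (hf _), Set.inter_comm A] using huniv

lemma ext_of_cylinder {X : ℕ → Type*} [∀ n, MeasurableSpace (X n)] [∀ n, Countable (X n)]
    [∀ n, MeasurableSingletonClass (X n)] {μ ν : Measure (∀ n, X n)} [IsFiniteMeasure ν]
    (h : ∀ f n, μ (PiNat.cylinder f (n + 1)) = ν (PiNat.cylinder f (n + 1))) : μ = ν := by
  obtain _ | ⟨⟨f₀⟩⟩ := isEmpty_or_nonempty (∀ n, X n)
  · exact Subsingleton.elim _ _
  have hmap (n : ℕ) : μ.map (frestrictLe n) = ν.map (frestrictLe n) := by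
    refine Measure.ext_of_singleton fun g ↦ ?_
    have hg : frestrictLe n (Function.updateFinset f₀ _ g) = g := frestrictLe_updateFinset f₀ g
    rw [Measure.map_apply (measurable_frestrictLe n) (measurableSet_singleton g),
      Measure.map_apply (measurable_frestrictLe n) (measurableSet_singleton g), ← hg,
      ← cylinder_succ_eq_preimage, h]
  have hν : IsProjectiveLimit ν fun I ↦ ν.map I.restrict := fun _ ↦ rfl
  have hfam : IsProjectiveMeasureFamily fun I ↦ ν.map I.restrict :=
    ProbabilityTheory.isProjectiveMeasureFamily_map_restrict
      fun n ↦ (measurable_pi_apply n).aemeasurable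
  exact ((isProjectiveLimit_nat_iff hfam μ).2 hmap).unique hν

variable [DiscreteMeasurableSpace S]

lemma measurableSet_apply_mem (t : ℕ) (U : Set S) : MeasurableSet {ω : ℕ → S | ω t ∈ U} :=
  measurable_pi_apply t (.of_discrete (s := U))

variable [Countable S] (good : S) (F : Set S)

lemma measurableSet_cylinder_succ (f : ℕ → S) (n : ℕ) :
    MeasurableSet (PiNat.cylinder f (n + 1)) := by
  rw [cylinder_succ_eq_preimage]
  exact measurable_frestrictLe n (measurableSet_singleton _)

lemma measurableSet_piLE_lt_absTime (t : ℕ) :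
    MeasurableSet[Filtration.piLE (X := fun _ ↦ S) t]
      {ω : ℕ → S | (t : ℕ∞) < absTime good F ω} := by
  rw [Filtration.piLE_eq_comap_frestrictLe]
  refine ⟨{g | ∀ i : Finset.Iic t, 0 < (i : ℕ) → g i ∉ insert good F}, .of_discrete, ?_⟩
  ext ω
  simp only [Set.mem_preimage, Set.mem_ofPred_eq, natCast_lt_absTime_iff, Subtype.forall,
    Finset.mem_Iic, frestrictLe_apply]
  exact forall_congr' fun _ ↦ forall_comm

lemma measurableSet_lt_absTime (t : ℕ) :
    MeasurableSet {ω : ℕ → S | (t : ℕ∞) < absTime good F ω} :=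
  Filtration.piLE.le t _ (measurableSet_piLE_lt_absTime good F t)

lemma measurableSet_hitsF : MeasurableSet {ω : ℕ → S | hitsF good F ω} := by
  simp only [hitsF_iff_exists_natCast_lt_absTime, Set.ofPred_exists]
  exact .iUnion fun n ↦
    (measurableSet_lt_absTime good F n).inter (measurableSet_apply_mem (n + 1) F)

lemma measurableSet_hitsWithoutReturn (x : S) : MeasurableSet (hitsWithoutReturn good F x) := by
  refine (measurableSet_hitsF good F).inter (measurableSet_setOfPred.2 ?_)
  exact .forall fun s ↦ .imp measurable_const <|
    .imp (measurableSet_setOfPred.1 (measurableSet_lt_absTime good F s))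
      (measurableSet_setOfPred.1 (measurableSet_apply_mem s {x}ᶜ))

end Measurability

section MarkovLaw

open Preorder

variable {S : Type*} [MeasurableSpace S]

/-- `ℙ z` is the law of the Markov chain with transition matrix `p` started at `z`, for every `z`.
The starting point of a cylinder is read off its base path `f`, which has `n` transitions when the
cylinder fixes the first `n + 1` states. -/
structure IsMarkovLaw (p : S → S → ℝ≥0∞) (ℙ : S → Measure (ℕ → S)) : Prop where
  isProbabilityMeasure (z : S) : IsProbabilityMeasure (ℙ z)
  measure_cylinder (f : ℕ → S) (n : ℕ) :
    ℙ (f 0) (PiNat.cylinder f (n + 1)) = ∏ i ∈ Finset.range n, p (f i) (f (i + 1))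

namespace IsMarkovLaw

variable [DiscreteMeasurableSpace S]
  {p : S → S → ℝ≥0∞} {ℙ : S → Measure (ℕ → S)} (h : IsMarkovLaw p ℙ)

include h

lemma ae_apply_zero_eq (z : S) : ∀ᵐ ω ∂ℙ z, ω 0 = z := by
  have := h.isProbabilityMeasure z
  have hstart : ℙ z {ω | ω 0 = z} = 1 := by
    simpa [PiNat.cylinder] using h.measure_cylinder (fun _ ↦ z) 0
  exact (mem_ae_iff_prob_eq_one (measurableSet_apply_mem 0 {z})).2 hstart

lemma measure_cylinder_eq_zero {z : S} {f : ℕ → S} (hf : f 0 ≠ z) (n : ℕ) :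
    ℙ z (PiNat.cylinder f (n + 1)) = 0 := by
  refine measure_eq_zero_iff_ae_notMem.2 ?_
  filter_upwards [h.ae_apply_zero_eq z] with ω hω hmem
  exact hf (hω ▸ (hmem 0 n.succ_pos).symm)

lemma measure_apply_one_eq (z y : S) : ℙ z {ω | ω 1 = y} = p z y := by
  let f : ℕ → S := Function.update (fun _ ↦ y) 0 z
  have hcyl : ℙ z (PiNat.cylinder f 2) = p z y := by
    simpa [f] using h.measure_cylinder f 1
  rw [← hcyl]
  refine measure_congr (Filter.eventuallyEq_set.2 ?_)
  filter_upwards [h.ae_apply_zero_eq z] with ω hω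
  simp [PiNat.mem_cylinder_iff, Nat.le_one_iff_eq_zero_or_eq_one, or_imp, forall_and, f, hω]

lemma measure_cylinder_add (z : S) (f : ℕ → S) (t n : ℕ) :
    ℙ z (PiNat.cylinder f (t + n + 1)) = ℙ z (PiNat.cylinder f (t + 1)) *
      ℙ (f t) (PiNat.cylinder (trajShift t f) (n + 1)) := by
  obtain rfl | hf := eq_or_ne (f 0) z
  · rw [h.measure_cylinder, h.measure_cylinder, Finset.prod_range_add]
    exact congrArg _ (h.measure_cylinder (trajShift t f) n).symm
  · rw [h.measure_cylinder_eq_zero hf, h.measure_cylinder_eq_zero hf, zero_mul]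

variable [Countable S]

lemma map_trajShift_restrict_cylinder (z : S) (f : ℕ → S) (t : ℕ) :
    ((ℙ z).restrict (PiNat.cylinder f (t + 1))).map (trajShift t) =
      ℙ z (PiNat.cylinder f (t + 1)) • ℙ (f t) := by
  have := h.isProbabilityMeasure
  have := (ℙ (f t)).smul_finite (measure_ne_top (ℙ z) (PiNat.cylinder f (t + 1)))
  refine ext_of_cylinder fun g n ↦ ?_
  have hmeas := measurableSet_cylinder_succ g n
  rw [Measure.map_apply (measurable_trajShift t) hmeas,
    Measure.restrict_apply (measurable_trajShift t hmeas), Measure.smul_apply, smul_eq_mul,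
    Set.inter_comm]
  obtain hg | hg := eq_or_ne (g 0) (f t)
  · obtain ⟨k, hkf, rfl⟩ := exists_trajShift_eq hg
    have hcyl : PiNat.cylinder f (t + 1) = PiNat.cylinder k (t + 1) :=
      PiNat.mem_cylinder_iff_eq.1 fun i hi ↦ (hkf i (Nat.le_of_lt_succ hi)).symm
    rw [hcyl, ← cylinder_add_eq_inter, h.measure_cylinder_add, hkf t le_rfl]
  · rw [h.measure_cylinder_eq_zero hg, mul_zero]
    refine measure_mono_null ?_ measure_empty
    rintro ω ⟨hinit, htail⟩
    exact hg ((htail 0 n.succ_pos).symm.trans (hinit t t.lt_succ_self))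

theorem measure_inter_preimage_trajShift (z x : S) {t : ℕ} {D C : Set (ℕ → S)}
    (hD : MeasurableSet[Filtration.piLE (X := fun _ ↦ S) t] D) (hC : MeasurableSet C) :
    ℙ z (D ∩ {ω | ω t = x} ∩ trajShift t ⁻¹' C) = ℙ z (D ∩ {ω | ω t = x}) * ℙ x C := by
  rw [Filtration.piLE_eq_comap_frestrictLe] at hD
  obtain ⟨B, -, rfl⟩ := hD
  set B' : Set (∀ _ : Finset.Iic t, S) := B ∩ {g | g ⟨t, Finset.mem_Iic.2 le_rfl⟩ = x}
  have hpre : frestrictLe (π := fun _ ↦ S) t ⁻¹' B ∩ {ω | ω t = x} = frestrictLe t ⁻¹' B' := rfl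
  have hfiber (g : ∀ _ : Finset.Iic t, S) :
      MeasurableSet (frestrictLe (π := fun _ ↦ S) t ⁻¹' {g}) :=
    measurable_frestrictLe t (measurableSet_singleton g)
  have hpoint (g : B') :
      (ℙ z).restrict (trajShift t ⁻¹' C) (frestrictLe t ⁻¹' {g.1}) =
        ℙ z (frestrictLe t ⁻¹' {g.1}) * ℙ x C := by
    set f : ℕ → S := Function.updateFinset (fun _ ↦ z) _ g.1
    have hf : frestrictLe t f = g.1 := frestrictLe_updateFinset _ _
    have hft : f t = x := (congrFun hf ⟨t, Finset.mem_Iic.2 le_rfl⟩).trans g.2.2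
    have hmap := congrArg (· C) (h.map_trajShift_restrict_cylinder z f t)
    rw [Measure.restrict_apply (hfiber _), ← hf, ← cylinder_succ_eq_preimage, Set.inter_comm]
    rwa [Measure.map_apply (measurable_trajShift t) hC,
      Measure.restrict_apply (measurable_trajShift t hC), Measure.smul_apply, smul_eq_mul,
      hft] at hmap
  rw [hpre, ← Measure.restrict_apply' (measurable_trajShift t hC),
    ← tsum_measure_preimage_singleton B'.to_countable fun g _ ↦ hfiber g,
    ← tsum_measure_preimage_singleton B'.to_countable fun g _ ↦ hfiber g,
    ← ENNReal.tsum_mul_right]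
  exact tsum_congr hpoint

end IsMarkovLaw

end MarkovLaw

section Green

variable {S : Type*} [MeasurableSpace S] (good : S) (F : Set S) (ℙ : S → Measure (ℕ → S))

/-- The Green function of the chain killed at absorption: the expected number of visits to `x`
strictly before the absorption time, time `0` included, for the chain started at `z`. -/
def greenFunction (z x : S) : ℝ≥0∞ :=
  ∑' t : ℕ, ℙ z {ω | (t : ℕ∞) < absTime good F ω ∧ ω t = x}

variable {good F ℙ}

lemma greenFunction_ne_zero {z x : S}
    (hreach : 0 < ℙ z {ω | ∃ t : ℕ, (t : ℕ∞) < absTime good F ω ∧ ω t = x}) :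
    greenFunction good F ℙ z x ≠ 0 := by
  rw [Set.ofPred_exists] at hreach
  exact (hreach.trans_le (measure_iUnion_le _)).ne'

variable [Countable S] [DiscreteMeasurableSpace S]

lemma measurableSet_transition (x y : S) (t : ℕ) :
    MeasurableSet {ω : ℕ → S | (t : ℕ∞) < absTime good F ω ∧ ω t = x ∧ ω (t + 1) = y} :=
  (measurableSet_lt_absTime good F t).inter
    ((measurableSet_apply_mem t {x}).inter (measurableSet_apply_mem (t + 1) {y}))

lemma measurable_transCount (x y : S) : Measurable (transCount good F x y) := by
  simp only [funext (transCount_eq_tsum_indicator x y)]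
  exact .tsum fun t ↦ measurable_one.indicator (measurableSet_transition x y t)

namespace IsMarkovLaw

variable {p : S → S → ℝ≥0∞} (h : IsMarkovLaw p ℙ)

include h

lemma measure_hitsF_inter_apply_one_eq (z y : S) :
    ℙ z ({ω | hitsF good F ω} ∩ {ω | ω 1 = y}) = p z y * gammaTilde good F ℙ y := by
  rw [gammaTilde, ← h.measure_apply_one_eq z y]
  split_ifs with hyF hygood
  · rw [mul_one, Set.inter_eq_right.2]
    exact fun ω (hω : ω 1 = y) ↦ hitsF_of_mem (hω ▸ hyF)
  · subst hygood
    rw [mul_zero]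
    exact measure_mono_null (fun ω hω ↦ not_hitsF_of_eq_good hyF hω.2 hω.1) measure_empty
  · have hmarkov := h.measure_inter_preimage_trajShift z y (t := 1) .univ
      (measurableSet_hitsF good F)
    simp only [Set.univ_inter] at hmarkov
    rw [← hmarkov, Set.inter_comm]
    congr 1
    ext ω
    refine and_congr_right fun (hω : ω 1 = y) ↦ hitsF_iff_hitsF_trajShift_one ?_
    rw [hω]
    exact fun hmem ↦ hmem.elim hygood hyF

lemma tsum_measure_visit_inter_preimage_trajShift (z x : S) {C : Set (ℕ → S)}
    (hC : MeasurableSet C) :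
    ∑' t : ℕ, ℙ z ({ω | (t : ℕ∞) < absTime good F ω ∧ ω t = x} ∩ trajShift t ⁻¹' C) =
      greenFunction good F ℙ z x * ℙ x C := by
  rw [greenFunction, ← ENNReal.tsum_mul_right]
  exact tsum_congr fun t ↦
    h.measure_inter_preimage_trajShift z x (measurableSet_piLE_lt_absTime good F t) hC

/-- The last-exit decomposition: partition by the time of the last visit to `x`, from which the
Markov property restarts the chain. -/
theorem measure_hitsF_inter_visit (z x : S) :
    ℙ z {ω | hitsF good F ω ∧ ∃ t : ℕ, (t : ℕ∞) < absTime good F ω ∧ ω t = x} =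
      greenFunction good F ℙ z x * ℙ x (hitsWithoutReturn good F x) := by
  have hE := measurableSet_hitsWithoutReturn good F x
  let L (t : ℕ) : Set (ℕ → S) :=
    {ω | (t : ℕ∞) < absTime good F ω ∧ ω t = x} ∩ trajShift t ⁻¹' hitsWithoutReturn good F x
  have hL (t : ℕ) : MeasurableSet (L t) :=
    ((measurableSet_lt_absTime good F t).inter (measurableSet_apply_mem t {x})).inter
      (measurable_trajShift t hE)
  have hdisj : Pairwise (Function.onFun Disjoint L) := by
    refine fun s t hst ↦ Set.disjoint_left.2 ?_
    rintro ω ⟨⟨hs, hxs⟩, hlast_s⟩ ⟨⟨ht, hxt⟩, hlast_t⟩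
    rw [Set.mem_preimage, trajShift_mem_hitsWithoutReturn_iff hs] at hlast_s
    rw [Set.mem_preimage, trajShift_mem_hitsWithoutReturn_iff ht] at hlast_t
    obtain hlt | hlt := hst.lt_or_gt
    · exact hlast_s.2 t hlt ht hxt
    · exact hlast_t.2 s hlt hs hxs
  rw [← h.tsum_measure_visit_inter_preimage_trajShift z x hE, ← measure_iUnion hdisj hL]
  congr 1
  ext ω
  simp only [L, Set.mem_iUnion]
  constructor
  · rintro ⟨hA, hvisit⟩
    have hT : absTime good F ω ≠ ⊤ := hA.elim fun n hn ↦ hn.1 ▸ ENat.natCast_ne_top n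
    obtain ⟨t, ht, hx, hlast⟩ := exists_last_visit hT hvisit
    exact ⟨t, ⟨ht, hx⟩, (trajShift_mem_hitsWithoutReturn_iff ht).2 ⟨hA, hlast⟩⟩
  · rintro ⟨t, ⟨ht, hx⟩, hE⟩
    exact ⟨((trajShift_mem_hitsWithoutReturn_iff ht).1 hE).1, t, ht, hx⟩

lemma measure_hitsWithoutReturn_ne_zero {x : S} (hγx : 0 < ℙ x {ω | hitsF good F ω}) :
    ℙ x (hitsWithoutReturn good F x) ≠ 0 := by
  intro hzero
  have hvisit := h.measure_hitsF_inter_visit (good := good) (F := F) x x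
  rw [hzero, mul_zero, measure_eq_zero_iff_ae_notMem] at hvisit
  refine hγx.ne' (measure_eq_zero_iff_ae_notMem.2 ?_)
  filter_upwards [hvisit, h.ae_apply_zero_eq x] with ω hω hstart hA
  exact hω ⟨hA, 0, zero_lt_absTime, hstart⟩

lemma greenFunction_ne_top (z : S) {x : S} (hγx : 0 < ℙ x {ω | hitsF good F ω}) :
    greenFunction good F ℙ z x ≠ ⊤ := by
  have := h.isProbabilityMeasure z
  refine (ENNReal.lt_top_of_mul_ne_top_left ?_ (h.measure_hitsWithoutReturn_ne_zero hγx)).ne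
  rw [← h.measure_hitsF_inter_visit]
  exact measure_ne_top _ _

lemma setLIntegral_transCount (z x y : S) :
    ∫⁻ ω in {ω | hitsF good F ω}, transCount good F x y ω ∂(ℙ z) =
      greenFunction good F ℙ z x * (p x y * gammaTilde good F ℙ y) := by
  have hC : MeasurableSet ({ω | hitsF good F ω} ∩ {ω : ℕ → S | ω 1 = y}) :=
    (measurableSet_hitsF good F).inter (measurableSet_apply_mem 1 {y})
  rw [← h.measure_hitsF_inter_apply_one_eq, ← h.tsum_measure_visit_inter_preimage_trajShift z x hC]
  simp only [transCount_eq_tsum_indicator]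
  rw [lintegral_tsum fun t ↦
    (measurable_one.indicator (measurableSet_transition x y t)).aemeasurable]
  refine tsum_congr fun t ↦ ?_
  have ht := measurableSet_transition (good := good) (F := F) x y t
  rw [lintegral_indicator_one ht, Measure.restrict_apply ht]
  congr 1
  ext ω
  constructor
  · rintro ⟨⟨hT, hx, hy⟩, hA⟩
    exact ⟨⟨hT, hx⟩, (hitsF_trajShift_iff hT).2 hA, hy⟩
  · rintro ⟨⟨hT, hx⟩, hA, hy⟩
    exact ⟨⟨hT, hx, hy⟩, (hitsF_trajShift_iff hT).1 hA⟩

lemma setLIntegral_tsum_transCount (z x : S) :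
    ∫⁻ ω in {ω | hitsF good F ω}, ∑' y, transCount good F x y ω ∂(ℙ z) =
      greenFunction good F ℙ z x * ℙ x {ω | hitsF good F ω} := by
  rw [lintegral_tsum fun y ↦ (measurable_transCount x y).aemeasurable]
  simp only [h.setLIntegral_transCount, ENNReal.tsum_mul_left,
    ← h.measure_hitsF_inter_apply_one_eq]
  rw [← tsum_measure_inter_preimage_singleton (ℙ x) fun y ↦ measurableSet_apply_mem 1 {y}]
  rfl

end IsMarkovLaw

end Green

theorem crossEntropy_eq_zeroVariance_general
    {S : Type*} [Countable S] [MeasurableSpace S] [DiscreteMeasurableSpace S]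
    (good : S) (F : Set S) {p : S → S → ℝ≥0∞} {ℙ : S → Measure (ℕ → S)} (hℙ : IsMarkovLaw p ℙ)
    (z x : S) (hγx : 0 < ℙ x {ω | hitsF good F ω})
    (hreach : 0 < ℙ z {ω | ∃ t : ℕ, (t : ℕ∞) < absTime good F ω ∧ ω t = x}) (y : S) :
    0 < ∫⁻ ω in {ω | hitsF good F ω}, ∑' w, transCount good F x w ω ∂(ℙ z) ∧
    (∫⁻ ω in {ω | hitsF good F ω}, transCount good F x y ω ∂(ℙ z)) /
      (∫⁻ ω in {ω | hitsF good F ω}, ∑' w, transCount good F x w ω ∂(ℙ z)) =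
      p x y * gammaTilde good F ℙ y / ℙ x {ω | hitsF good F ω} := by
  have hG := greenFunction_ne_zero hreach
  rw [hℙ.setLIntegral_tsum_transCount, hℙ.setLIntegral_transCount]
  exact ⟨ENNReal.mul_pos hG hγx.ne',
    ENNReal.mul_div_mul_left _ _ hG (hℙ.greenFunction_ne_top z hγx)⟩

/-- **Corollary**: the cross-entropy transition probabilities coincide with the zero-variance
(conditioned-on-`A`) transition probabilities: for every internal state `x` with `γ(x) > 0`
that is reachable from the good state before absorption, and every `y`,
`E[1_A N(x,y) | X 0 = 0] / E[1_A Σ_z N(x,z) | X 0 = 0] = p(x,y) γ̃(y) / γ(x)`,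
the denominator being strictly positive. -/
theorem crossEntropy_eq_zeroVariance
    {S : Type*} [Fintype S] [DecidableEq S] [MeasurableSpace S] [DiscreteMeasurableSpace S]
    (good : S) (F : Set S) (hgF : good ∉ F)
    (p : S → S → ℝ≥0∞) (hrow : ∀ x, ∑ y, p x y = 1)
    (hpgg : p good good = 0) (hpgF : ∀ y ∈ F, p good y = 0)
    (ℙ : S → Measure (ℕ → S)) (hprob : ∀ x, IsProbabilityMeasure (ℙ x))
    -- `ℙ x` is the law of the Markov chain with transition matrix `p` started at `x`
    (hcyl : ∀ x (n : ℕ) (f : ℕ → S),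
      ℙ x {ω | ∀ i ≤ n, ω i = f i} =
        (if f 0 = x then 1 else 0) * ∏ i ∈ Finset.range n, p (f i) (f (i + 1)))
    -- from every state the chain is absorbed in `{good} ∪ F` in finite time a.s.
    (habs : ∀ z, ℙ z {ω | absTime good F ω ≠ ⊤} = 1)
    -- the rare event has positive probability from the good state
    (hA : 0 < ℙ good {ω | hitsF good F ω})
    (x : S) (hx : x ≠ good ∧ x ∉ F)
    -- `γ(x) > 0`
    (hγx : 0 < ℙ x {ω | hitsF good F ω})
    -- `x` is reachable from the good state strictly before absorption
    (hreach : 0 < ℙ good {ω | ∃ t : ℕ, 0 < t ∧ (t : ℕ∞) < absTime good F ω ∧ ω t = x})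
    (y : S) :
    0 < ∫⁻ ω in {ω | hitsF good F ω}, ∑ z, transCount good F x z ω ∂(ℙ good) ∧
    (∫⁻ ω in {ω | hitsF good F ω}, transCount good F x y ω ∂(ℙ good)) /
      (∫⁻ ω in {ω | hitsF good F ω}, ∑ z, transCount good F x z ω ∂(ℙ good)) =
      p x y * gammaTilde good F ℙ y / ℙ x {ω | hitsF good F ω} := by
  have hℙ : IsMarkovLaw p ℙ := ⟨hprob, fun f n ↦ by
    simpa [PiNat.cylinder, Nat.lt_succ_iff] using hcyl (f 0) n f⟩
  have hreach' : 0 < ℙ good {ω | ∃ t : ℕ, (t : ℕ∞) < absTime good F ω ∧ ω t = x} :=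
    hreach.trans_le (measure_mono fun _ ⟨t, _, ht⟩ ↦ ⟨t, ht⟩)
  simpa only [tsum_fintype] using
    crossEntropy_eq_zeroVariance_general good F hℙ good x hγx hreach' y
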